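/- arXiv:2510.25571 — 2 statements merged into one kernel-verified Lean document; each statement's English description precedes it below -/
import Mathlib

section
/- For all real numbers a, b, c, T with 0 < a ≤ T, 0 < b ≤ T, 0 < c ≤ T, one has ∫_{−T}^{T} 1/√((t² + a²)(t² + b²)(t² + c²)) dt ≤ π/( max{a,b,c} · min{a,b,c} ). -/
lemma aux_prod (a b c m M t : ℝ) (hm : 0 < m) (hma : m ≤ a) (hmb : m ≤ b) (hmc : m ≤ c)
    (hM : M = a ∨ M = b ∨ M = c) :
    (M * (t ^ 2 + m ^ 2)) ^ 2 ≤ (t ^ 2 + a ^ 2) * (t ^ 2 + b ^ 2) * (t ^ 2 + c ^ 2) := by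
  have key : ∀ x y z : ℝ, m ≤ x → m ≤ y → m ≤ z →
      (x * (t ^ 2 + m ^ 2)) ^ 2 ≤ (t ^ 2 + x ^ 2) * ((t ^ 2 + y ^ 2) * (t ^ 2 + z ^ 2)) := by
    intro x y z hx hy hz
    have h1 : x ^ 2 ≤ t ^ 2 + x ^ 2 := by nlinarith [sq_nonneg t]
    have h2 : t ^ 2 + m ^ 2 ≤ t ^ 2 + y ^ 2 := by gcongr
    have h3 : t ^ 2 + m ^ 2 ≤ t ^ 2 + z ^ 2 := by gcongr
    calc (x * (t ^ 2 + m ^ 2)) ^ 2 = x ^ 2 * ((t ^ 2 + m ^ 2) * (t ^ 2 + m ^ 2)) := by ring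
      _ ≤ _ := by gcongr
  rcases hM with rfl | rfl | rfl
  · linarith [key M b c hma hmb hmc]
  · linarith [key M a c hmb hma hmc]
  · linarith [key M a b hmc hma hmb]

lemma aux_int (a b c m M T : ℝ) (hT : 0 < T) (hm : 0 < m) (hma : m ≤ a) (hmb : m ≤ b)
    (hmc : m ≤ c) (hM : M = a ∨ M = b ∨ M = c) :
    (∫ t in (-T)..T, 1 / Real.sqrt ((t ^ 2 + a ^ 2) * (t ^ 2 + b ^ 2) * (t ^ 2 + c ^ 2))) ≤
      Real.pi / (M * m) := by
  have hM0 : 0 < M := by rcases hM with h | h | h <;> linarith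
  have ha : 0 < a := by linarith
  have hb : 0 < b := by linarith
  have hc : 0 < c := by linarith
  have cont : Continuous (fun t : ℝ => 1 / (M * (t ^ 2 + m ^ 2))) := by
    refine Continuous.div (by fun_prop) (by fun_prop) (fun t => ?_)
    positivity
  have cont' : Continuous (fun t : ℝ =>
      1 / Real.sqrt ((t ^ 2 + a ^ 2) * (t ^ 2 + b ^ 2) * (t ^ 2 + c ^ 2))) := by
    refine Continuous.div (by fun_prop) (by fun_prop) (fun t => ?_)
    positivity
  have hle : (∫ t in (-T)..T,
      1 / Real.sqrt ((t ^ 2 + a ^ 2) * (t ^ 2 + b ^ 2) * (t ^ 2 + c ^ 2))) ≤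
      ∫ t in (-T)..T, 1 / (M * (t ^ 2 + m ^ 2)) := by
    refine intervalIntegral.integral_mono_on (by linarith) (cont'.intervalIntegrable _ _)
      (cont.intervalIntegrable _ _) (fun t _ => ?_)
    have : 0 < M * (t ^ 2 + m ^ 2) := by positivity
    exact one_div_le_one_div_of_le this
      (Real.le_sqrt_of_sq_le (aux_prod a b c m M t hm hma hmb hmc hM))
  have hd : ∀ t ∈ Set.uIcc (-T) T,
      HasDerivAt (fun t : ℝ => Real.arctan (t / m) / (M * m)) (1 / (M * (t ^ 2 + m ^ 2))) t := by
    intro t _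
    have h := (((hasDerivAt_id t).div_const m).arctan).div_const (M * m)
    refine h.congr_deriv ?_
    simp only [id]
    have : t ^ 2 + m ^ 2 ≠ 0 := by positivity
    have : 1 + (t / m) ^ 2 ≠ 0 := by positivity
    field_simp
    ring
  rw [intervalIntegral.integral_eq_sub_of_hasDerivAt hd (cont.intervalIntegrable _ _)] at hle
  refine hle.trans ?_
  rw [← sub_div]
  have h1 := Real.arctan_lt_pi_div_two (T / m)
  have h2 := Real.neg_pi_div_two_lt_arctan (-T / m)
  gcongr
  linarith


/-- For all real `a, b, c, T` with `0 < a ≤ T`, `0 < b ≤ T`, `0 < c ≤ T`,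
`∫_{-T}^{T} 1/√((t²+a²)(t²+b²)(t²+c²)) dt ≤ π/(max{a,b,c} · min{a,b,c})`. -/
theorem integral_inv_sqrt_triple_le (a b c T : ℝ)
    (ha : 0 < a) (haT : a ≤ T) (hb : 0 < b) (hbT : b ≤ T) (hc : 0 < c) (hcT : c ≤ T) :
    (∫ t in (-T)..T, 1 / Real.sqrt ((t ^ 2 + a ^ 2) * (t ^ 2 + b ^ 2) * (t ^ 2 + c ^ 2))) ≤
      Real.pi / (max (max a b) c * min (min a b) c) := by
  refine aux_int a b c _ _ T (by linarith) (by positivity) ?_ ?_ ?_ ?_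
  · simp
  · simp
  · simp
  · rcases max_choice (max a b) c with h | h
    · rcases max_choice a b with h' | h'
      · left; rw [h, h']
      · right; left; rw [h, h']
    · right; right; exact h
end

section
/- Horizontal-segment estimate: let A be an n×n real symmetric matrix with eigenvalues λ_1, …, λ_n, let T > 0, and let a_0 ≤ a_1 be real numbers with a_1 − a_0 ≤ T. Then ∫_{a_0}^{a_1} 1/( √(x² + T²) · min_{1 ≤ i ≤ n} ((x − λ_i)² + T²) ) dx ≤ 1/T². -/
open Matrix

/-- **Horizontal-segment estimate** (Lemma 5.5 / `N₂`, `N₄` bound).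
For eigenvalues `λ_1, …, λ_n` of a real symmetric matrix, `T > 0` and
`a₀ ≤ a₁` with `a₁ − a₀ ≤ T`, one has
`∫_{a₀}^{a₁} 1/(√(x²+T²) · minᵢ((x−λᵢ)²+T²)) dx ≤ 1/T²`. -/
theorem horizontal_segment_estimate {n : ℕ} (hn : 1 ≤ n)
    (A : Matrix (Fin n) (Fin n) ℝ) (hA : A.IsSymm)
    (lam : Fin n → ℝ) (u : Fin n → Fin n → ℝ)
    (huortho : ∀ i j, u i ⬝ᵥ u j = if i = j then (1 : ℝ) else 0)
    (hdecomp : A = ∑ i, lam i • Matrix.vecMulVec (u i) (u i))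
    (T a0 a1 : ℝ) (hT : 0 < T) (ha : a0 ≤ a1) (hlen : a1 - a0 ≤ T) :
    (∫ x in a0..a1,
      1 / (Real.sqrt (x ^ 2 + T ^ 2) * ⨅ i : Fin n, ((x - lam i) ^ 2 + T ^ 2))) ≤
      1 / T ^ 2 := by
  have hne : Nonempty (Fin n) := ⟨⟨0, hn⟩⟩
  have hb : ∀ x ∈ Set.uIoc a0 a1,
      ‖1 / (Real.sqrt (x ^ 2 + T ^ 2) * ⨅ i : Fin n, ((x - lam i) ^ 2 + T ^ 2))‖
        ≤ 1 / (T * T ^ 2) := by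
    intro x _
    have h1 : T ≤ Real.sqrt (x ^ 2 + T ^ 2) :=
      Real.le_sqrt_of_sq_le (by nlinarith [sq_nonneg x])
    have h2 : T ^ 2 ≤ ⨅ i : Fin n, ((x - lam i) ^ 2 + T ^ 2) :=
      le_ciInf fun i => by nlinarith [sq_nonneg (x - lam i)]
    have h3 : T * T ^ 2 ≤
        Real.sqrt (x ^ 2 + T ^ 2) * ⨅ i : Fin n, ((x - lam i) ^ 2 + T ^ 2) :=
      mul_le_mul h1 h2 (by positivity) (by positivity)
    have h4 : 0 < T * T ^ 2 := by positivity
    rw [Real.norm_of_nonneg (one_div_nonneg.mpr (h4.le.trans h3))]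
    exact one_div_le_one_div_of_le h4 h3
  have h := intervalIntegral.norm_integral_le_of_norm_le_const hb
  rw [abs_of_nonneg (sub_nonneg.mpr ha)] at h
  calc _ ≤ _ := Real.le_norm_self _
    _ ≤ _ := h
    _ ≤ 1 / (T * T ^ 2) * T := by gcongr
    _ = 1 / T ^ 2 := by field_simp
end
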